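/- Let R = R^sc_⊞ ∪ R^sc_∧ be the set of single-conclusion rules over the signature with binary connectives ∧ and ⊞, where R^sc_⊞ = {({p,q}, p⊞q)} ∪ {({φ}, p) : φ ∈ L_⊞({p})} and R^sc_∧ = {({p∧q}, p), ({p∧q}, q), ({p,q}, p∧q)}. Then p∧q is not Hilbert-derivable from {(p∧q) ⊞ (q∧p)} using the rules R, i.e. {(p∧q)⊞(q∧p)} ⊬_R p∧q, even though {(p∧q)⊞(q∧p)} ⊩_{∧⊞} {p∧q} holds semantically. -/

import Mathlib

/-- Formulas built from countably many propositional variables with two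
binary connectives: `∧` (conjunction) and `⊞` (platypus). -/
inductive Fm2 : Type where
  | var : ℕ → Fm2
  | conj : Fm2 → Fm2 → Fm2
  | pl : Fm2 → Fm2 → Fm2
deriving DecidableEq

namespace Fm2

/-- A `𝔅_{∧⊞}`-valuation: `v (φ ∧ ψ) = min (v φ) (v ψ)` and
`v (φ ⊞ ψ) ∈ {min (v φ) (v ψ), max (v φ) (v ψ)}`. -/
def IsVal (v : Fm2 → Bool) : Prop :=
  (∀ a b : Fm2, v (a.conj b) = (v a && v b)) ∧
  (∀ a b : Fm2, v (a.pl b) = (v a && v b) ∨ v (a.pl b) = (v a || v b))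

/-- The multiple-conclusion consequence `Γ ⊩_{∧⊞} Δ`. -/
def Mc (Γ Δ : Set Fm2) : Prop :=
  ∀ v : Fm2 → Bool, IsVal v → (∀ φ ∈ Γ, v φ = true) → ∃ ψ ∈ Δ, v ψ = true

end Fm2

namespace Fm2

/-- Homomorphic extension of a substitution `σ : P → L_{∧⊞}` to formulas. -/
def subst (σ : ℕ → Fm2) : Fm2 → Fm2
  | var n => σ n
  | conj a b => (subst σ a).conj (subst σ b)
  | pl a b => (subst σ a).pl (subst σ b)

/-- Hilbert derivability from a set `R` of single-conclusion rules: `φ`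
belongs to the smallest set containing `Γ` and closed under substitution
instances of the rules in `R`. -/
inductive Der (R : Set (Set Fm2 × Fm2)) (Γ : Set Fm2) : Fm2 → Prop
  | prem {φ : Fm2} : φ ∈ Γ → Der R Γ φ
  | app {Prem : Set Fm2} {ψ : Fm2} (σ : ℕ → Fm2) : (Prem, ψ) ∈ R →
      (∀ π ∈ Prem, Der R Γ (subst σ π)) → Der R Γ (subst σ ψ)

/-- Membership in `L_⊞({p})`: formulas built from the single variable `p`
using only `⊞`. -/
inductive PlOnly (p : ℕ) : Fm2 → Prop
  | var : PlOnly p (var p)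
  | pl {a b : Fm2} : PlOnly p a → PlOnly p b → PlOnly p (a.pl b)

/-- `R^sc_⊞ = {({p,q}, p ⊞ q)} ∪ {({φ}, p) : φ ∈ L_⊞({p})}`
(with `p`, `q` the variables `0`, `1`). -/
def RscPl : Set (Set Fm2 × Fm2) :=
  {({var 0, var 1}, (var 0).pl (var 1))} ∪
  {r | ∃ φ : Fm2, PlOnly 0 φ ∧ r = ({φ}, var 0)}

/-- `R^sc_∧ = {({p ∧ q}, p), ({p ∧ q}, q), ({p,q}, p ∧ q)}`. -/
def RscConj : Set (Set Fm2 × Fm2) :=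
  {({(var 0).conj (var 1)}, var 0), ({(var 0).conj (var 1)}, var 1),
   ({var 0, var 1}, (var 0).conj (var 1))}

end Fm2

/-- A closed theory separating the premise from the conclusion. -/
def Fm2.Sep (A B : Fm2) : Fm2 → Prop
  | .var _ => False
  | .conj a b => Fm2.Sep A B a ∧ Fm2.Sep A B b
  | .pl a b => (Fm2.Sep A B a ∧ Fm2.Sep A B b) ∨ (a = A ∧ b = B)

theorem Fm2.sep_plOnly {p q : ℕ} (hpq : p ≠ q) (σ : ℕ → Fm2) {φ : Fm2} (h : Fm2.PlOnly 0 φ) :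
    Fm2.Sep ((Fm2.var p).conj (Fm2.var q)) ((Fm2.var q).conj (Fm2.var p)) (Fm2.subst σ φ) →
    Fm2.Sep ((Fm2.var p).conj (Fm2.var q)) ((Fm2.var q).conj (Fm2.var p)) (σ 0) := by
  induction h with
  | var => exact id
  | pl ha hb iha ihb =>
    rintro (⟨h1, _⟩ | ⟨h1, h2⟩)
    · exact iha h1
    · exfalso
      cases ha with
      | pl _ _ => simp [Fm2.subst] at h1
      | var =>
        cases hb with
        | pl _ _ => simp [Fm2.subst] at h2
        | var =>
          rw [h1] at h2
          simp at h2
          exact hpq h2.1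

open Fm2 in
/-- with `R = R^sc_⊞ ∪ R^sc_∧`, the formula `p ∧ q` is not
Hilbert-derivable from `{(p ∧ q) ⊞ (q ∧ p)}` using `R`, even though
`{(p ∧ q) ⊞ (q ∧ p)} ⊩_{∧⊞} {p ∧ q}` holds semantically. -/
theorem conj_platypus_not_derivable (p q : ℕ) (hpq : p ≠ q) :
    ¬ Der (RscPl ∪ RscConj)
        {((Fm2.var p).conj (Fm2.var q)).pl ((Fm2.var q).conj (Fm2.var p))}
        ((Fm2.var p).conj (Fm2.var q)) ∧
    Mc {((Fm2.var p).conj (Fm2.var q)).pl ((Fm2.var q).conj (Fm2.var p))}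
      {(Fm2.var p).conj (Fm2.var q)} := by
  constructor
  · intro h
    have key : ∀ φ, Der (RscPl ∪ RscConj)
        {((Fm2.var p).conj (Fm2.var q)).pl ((Fm2.var q).conj (Fm2.var p))} φ →
        Fm2.Sep ((Fm2.var p).conj (Fm2.var q)) ((Fm2.var q).conj (Fm2.var p)) φ := by
      intro φ hφ
      induction hφ with
      | prem hm =>
        rw [Set.mem_singleton_iff] at hm
        subst hm
        exact Or.inr ⟨rfl, rfl⟩
      | app σ hr _ ih =>
        rcases hr with (hr | ⟨φ, hφ, hr⟩) | hr | hr | hr <;>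
          obtain ⟨rfl, rfl⟩ := Prod.mk.inj hr
        · exact Or.inl ⟨ih (Fm2.var 0) (by simp), ih (Fm2.var 1) (by simp)⟩
        · exact Fm2.sep_plOnly hpq σ hφ (ih φ rfl)
        · exact (ih _ rfl).1
        · exact (ih _ rfl).2
        · exact ⟨ih (Fm2.var 0) (by simp), ih (Fm2.var 1) (by simp)⟩
    exact (key _ h).1
  · intro v hv h
    refine ⟨_, rfl, ?_⟩
    have h0 := h _ rfl
    have h1 := hv.2 ((Fm2.var p).conj (Fm2.var q)) ((Fm2.var q).conj (Fm2.var p))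
    rw [h0, hv.1, hv.1] at h1
    rw [hv.1]
    revert h1
    cases v (Fm2.var p) <;> cases v (Fm2.var q) <;> simp
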